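/- Let k ≥ 1 be an integer and let p, q ∈ (1, ∞). Then lim_{m→∞} [ (∫_ℝ |ω|^{−pk} F_m(ω)^{p/2} dω)^{1/p} / (∫_ℝ F_m(ω)^{q/2} dω)^{1/q} ] = (2π)^{1/p−1/q} · π^{−k} · ((1 − 2^{1−pk})/(pk − 1))^{1/p}. (The left-hand side is the exact constant C_{k;p,q}(ψ_m^D) = ‖|ω|^{−k} (ψ_m^D)^∧(ω)‖_p / ‖(ψ_m^D)^∧‖_q for the orthogonal Daubechies wavelet ψ_m^D with m vanishing moments.) -/

import Mathlib

/-!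
As `m → ∞` the filter `M_m` tends to the indicator of the band `|ω| < π/2` (mod `2π`), so `F_m`
tends almost everywhere to `1/(2π)` on `π < |ω| < 2π` and to `0` elsewhere, which is the squared
spectrum of the Shannon wavelet. The claimed constant is the quotient for this limit, and the work
is to dominate both integrands uniformly in `m`.

With `m = N + 1` the filter is `Q_N(cos ω)`, where `Q_N(x)` is the normalized integral of
`(1 - t²)^N` over `[-1, x]`. The elementary bound `Q_N(x) ≤ (1 - x²)^N` for `x ≤ 0`
(`Qpoly_le_pow`) together with `Q_N(-x) = 1 - Q_N(x)` gives the pointwise limit, and near `ω = 0`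
it gives `F_m(ω) ≤ sin(ω/2)^(2N)`, which absorbs the weight `|ω|^(-pk)`.

For the decay at infinity, `M_m ≤ G^N` with `G = 1` where `cos ω ≥ 0` and `G = sin² ω` elsewhere.
The function `g(ω) = min (sin²(ω/2)) (4/5)` satisfies `G(ω) g(ω) ≤ (4/5) g(2ω)`
(`majG_mul_truncSin_le`). Telescoping this along `ω, 2ω, 4ω, …` bounds `F_m` on the dyadic band
`2^n π ≤ |ω| < 2^(n+1) π` by `(2 (4/5)^(n+1))^N`, and since also `F_m ≤ 1`, this is
`O(|ω|^(-4))` uniformly in `N ≥ 14`. As `p, q > 1`, the powers `F^(p/2)` and `F^(q/2)` are at most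
`F^(1/2) = O(|ω|^(-2))`, and dominated convergence applies.
-/

open MeasureTheory Filter
open scoped Topology

/-- `c_m = (∫_0^π sin^{2m-1} u du)⁻¹`. -/
noncomputable def cm (m : ℕ) : ℝ :=
  (∫ u in (0:ℝ)..Real.pi, Real.sin u ^ (2 * m - 1))⁻¹

/-- `M_m(ω) = 1 - c_m ∫_0^ω sin^{2m-1} u du`, i.e. `|H_m(ω)|²` for the Daubechies filter. -/
noncomputable def Mm (m : ℕ) (ω : ℝ) : ℝ :=
  1 - cm m * ∫ u in (0:ℝ)..ω, Real.sin u ^ (2 * m - 1)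

/-- `F_m(ω) = (1/(2π)) M_m(ω/2 + π) ∏_{l=1}^∞ M_m(2^{-l-1} ω) = |(ψ_m^D)^∧(ω)|²`. -/
noncomputable def Fm (m : ℕ) (ω : ℝ) : ℝ :=
  (1 / (2 * Real.pi)) * Mm m (ω / 2 + Real.pi) *
    ∏' l : ℕ, Mm m (2 ^ (-((l : ℝ) + 2)) * ω)

/-! ### The filter as a polynomial in the cosine -/

/-- `Q_N(x) = ∫_{-1}^x (1-t²)^N dt / ∫_{-1}^1 (1-t²)^N dt`, the polynomial with
`M_{N+1}(ω) = Q_N(cos ω)`. -/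
noncomputable def Qpoly (N : ℕ) (x : ℝ) : ℝ :=
  (∫ t in (-1:ℝ)..x, (1 - t ^ 2) ^ N) / ∫ t in (-1:ℝ)..1, (1 - t ^ 2) ^ N

lemma weight_intervalIntegrable (N : ℕ) (a b : ℝ) :
    IntervalIntegrable (fun t : ℝ => (1 - t ^ 2) ^ N) volume a b :=
  Continuous.intervalIntegrable (by fun_prop) a b

lemma weight_integral_pos (N : ℕ) : 0 < ∫ t in (-1:ℝ)..1, (1 - t ^ 2) ^ N := by
  refine intervalIntegral.intervalIntegral_pos_of_pos_on (weight_intervalIntegrable N _ _) ?_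
    (by norm_num)
  intro t ht
  have h1 := ht.1
  have h2 := ht.2
  exact pow_pos (by nlinarith) N

lemma Qpoly_nonneg (N : ℕ) {x : ℝ} (h1 : -1 ≤ x) (h2 : x ≤ 1) : 0 ≤ Qpoly N x := by
  refine div_nonneg (intervalIntegral.integral_nonneg h1 ?_) (weight_integral_pos N).le
  intro t ht
  have h3 := ht.1
  have h4 := ht.2
  exact pow_nonneg (by nlinarith) N

/-- The quadrature mirror identity `|H(ω)|² + |H(ω + π)|² = 1`. -/
lemma Qpoly_neg (N : ℕ) (x : ℝ) : Qpoly N (-x) = 1 - Qpoly N x := by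
  have h1 : (∫ t in (-1:ℝ)..(-x), (1 - t ^ 2) ^ N) = ∫ t in x..1, (1 - t ^ 2) ^ N := by
    have := intervalIntegral.integral_comp_neg (a := -1) (b := -x)
      (fun t : ℝ => (1 - t ^ 2) ^ N)
    simpa using this
  have h2 := intervalIntegral.integral_add_adjacent_intervals
    (weight_intervalIntegrable N (-1) x) (weight_intervalIntegrable N x 1)
  have h3 := (weight_integral_pos N).ne'
  unfold Qpoly
  rw [h1, eq_sub_iff_add_eq, ← add_div, add_comm, h2, div_self h3]

lemma Qpoly_le_one (N : ℕ) {x : ℝ} (h1 : -1 ≤ x) (h2 : x ≤ 1) : Qpoly N x ≤ 1 := by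
  have h3 := Qpoly_neg N x
  have h4 := Qpoly_nonneg N (x := -x) (by linarith) (by linarith)
  linarith

/-- The stop band estimate. It rests on `1 - (x - s)² ≤ (1 - x²)(1 - s²)` for `x ≤ 0 ≤ s`. -/
lemma Qpoly_le_pow (N : ℕ) {x : ℝ} (h1 : -1 ≤ x) (h2 : x ≤ 0) :
    Qpoly N x ≤ (1 - x ^ 2) ^ N := by
  have hx : 0 ≤ (1 - x ^ 2) ^ N := pow_nonneg (by nlinarith) N
  unfold Qpoly
  rw [div_le_iff₀ (weight_integral_pos N)]
  have e1 : (∫ t in (-1:ℝ)..x, (1 - t ^ 2) ^ N) =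
      ∫ s in (0:ℝ)..(1 + x), (1 - (x - s) ^ 2) ^ N := by
    have := intervalIntegral.integral_comp_sub_left (a := 0) (b := 1 + x)
      (fun t : ℝ => (1 - t ^ 2) ^ N) x
    rw [this]
    congr 1 <;> ring
  have e2 : (∫ s in (0:ℝ)..(1 + x), (1 - (x - s) ^ 2) ^ N) ≤
      ∫ s in (0:ℝ)..(1 + x), (1 - x ^ 2) ^ N * (1 - s ^ 2) ^ N := by
    refine intervalIntegral.integral_mono_on (by linarith)
      (Continuous.intervalIntegrable (by fun_prop) _ _)
      (Continuous.intervalIntegrable (by fun_prop) _ _) ?_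
    intro s hs
    have h3 := hs.1
    have h4 := hs.2
    rw [← mul_pow]
    exact pow_le_pow_left₀ (by nlinarith)
      (by nlinarith [mul_nonneg (neg_nonneg.2 h2) h3, mul_nonneg (sq_nonneg x) (sq_nonneg s)]) N
  have e3 : (∫ s in (0:ℝ)..(1 + x), (1 - s ^ 2) ^ N) ≤ ∫ s in (-1:ℝ)..1, (1 - s ^ 2) ^ N := by
    refine intervalIntegral.integral_mono_interval (by norm_num) (by linarith) (by linarith) ?_
      (weight_intervalIntegrable N _ _)
    filter_upwards [ae_restrict_mem measurableSet_Ioc] with s hs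
    have h3 := hs.1
    have h4 := hs.2
    exact pow_nonneg (by nlinarith) N
  rw [e1]
  refine e2.trans ?_
  rw [intervalIntegral.integral_const_mul]
  exact mul_le_mul_of_nonneg_left e3 hx

lemma sin_pow_integral (N : ℕ) (ω : ℝ) :
    (∫ u in (0:ℝ)..ω, Real.sin u ^ (2 * (N + 1) - 1)) =
      ∫ t in (Real.cos ω)..1, (1 - t ^ 2) ^ N := by
  have h := integral_sin_pow_odd_mul_cos_pow (a := 0) (b := ω) N 0
  have e : 2 * (N + 1) - 1 = 2 * N + 1 := by omega
  simpa [e] using h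

lemma Mm_eq (N : ℕ) (ω : ℝ) : Mm (N + 1) ω = Qpoly N (Real.cos ω) := by
  have h2 := intervalIntegral.integral_add_adjacent_intervals
    (weight_intervalIntegrable N (-1) (Real.cos ω)) (weight_intervalIntegrable N (Real.cos ω) 1)
  have h3 := (weight_integral_pos N).ne'
  unfold Mm cm Qpoly
  rw [sin_pow_integral, sin_pow_integral, Real.cos_pi, ← h2]
  rw [← h2] at h3
  field_simp
  ring

lemma Mm_nonneg (N : ℕ) (ω : ℝ) : 0 ≤ Mm (N + 1) ω := by
  rw [Mm_eq]; exact Qpoly_nonneg N (Real.neg_one_le_cos _) (Real.cos_le_one _)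

lemma Mm_le_one (N : ℕ) (ω : ℝ) : Mm (N + 1) ω ≤ 1 := by
  rw [Mm_eq]; exact Qpoly_le_one N (Real.neg_one_le_cos _) (Real.cos_le_one _)

lemma Mm_le_pow (N : ℕ) {ω : ℝ} (h : Real.cos ω ≤ 0) :
    Mm (N + 1) ω ≤ (Real.sin ω ^ 2) ^ N := by
  rw [Mm_eq, Real.sin_sq]; exact Qpoly_le_pow N (Real.neg_one_le_cos _) h

lemma Mm_add_pi (N : ℕ) (ω : ℝ) : Mm (N + 1) (ω + Real.pi) = 1 - Mm (N + 1) ω := by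
  rw [Mm_eq, Mm_eq, Real.cos_add_pi, Qpoly_neg]

lemma one_sub_Mm_le_pow (N : ℕ) {ω : ℝ} (h : 0 ≤ Real.cos ω) :
    1 - Mm (N + 1) ω ≤ (Real.sin ω ^ 2) ^ N := by
  rw [← Mm_add_pi]
  have := Mm_le_pow N (ω := ω + Real.pi) (by rw [Real.cos_add_pi]; linarith)
  simpa [Real.sin_add_pi] using this

lemma continuous_Mm (N : ℕ) : Continuous (Mm (N + 1)) := by
  have h : Continuous (fun ω : ℝ => ∫ u in (0:ℝ)..ω, Real.sin u ^ (2 * (N + 1) - 1)) :=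
    intervalIntegral.continuous_primitive
      (fun a b => Continuous.intervalIntegrable (by fun_prop) a b) 0
  unfold Mm
  fun_prop

lemma one_sub_Mm_le_abs (N : ℕ) (ω : ℝ) : 1 - Mm (N + 1) ω ≤ |cm (N + 1)| * |ω| := by
  have h : ‖∫ u in (0:ℝ)..ω, Real.sin u ^ (2 * (N + 1) - 1)‖ ≤ 1 * |ω - 0| := by
    refine intervalIntegral.norm_integral_le_of_norm_le_const ?_
    intro u _
    rw [norm_pow]
    exact pow_le_one₀ (norm_nonneg _) (Real.abs_sin_le_one u)
  rw [one_mul, sub_zero, Real.norm_eq_abs] at h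
  unfold Mm
  rw [sub_sub_cancel]
  refine (le_abs_self _).trans ?_
  rw [abs_mul]
  exact mul_le_mul_of_nonneg_left h (abs_nonneg _)

/-! ### The infinite product -/

/-- The infinite product `∏_{l ≥ 1} M_{N+1}(2^{-l-1} ω)`, indexed from `0` and written with
natural powers of `2`; up to normalization it is the squared modulus of the Fourier transform of
the scaling function at `ω / 2`. -/
noncomputable def scalProd (N : ℕ) (ω : ℝ) : ℝ := ∏' l : ℕ, Mm (N + 1) (ω / 2 ^ (l + 2))

lemma Fm_eq (N : ℕ) (ω : ℝ) :
    Fm (N + 1) ω = (1 / (2 * Real.pi)) * (1 - Mm (N + 1) (ω / 2)) * scalProd N ω := by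
  unfold Fm scalProd
  rw [Mm_add_pi]
  congr 2
  funext l
  congr 1
  rw [Real.rpow_neg (by norm_num), div_eq_inv_mul]
  congr 2
  exact_mod_cast Real.rpow_natCast 2 (l + 2)

lemma scalProd_tendsto (N : ℕ) (ω : ℝ) :
    Tendsto (fun n => ∏ l ∈ Finset.range n, Mm (N + 1) (ω / 2 ^ (l + 2))) atTop
      (𝓝 (scalProd N ω)) := by
  have hs : Summable (fun l : ℕ => ‖Mm (N + 1) (ω / 2 ^ (l + 2)) - 1‖) := by
    refine Summable.of_nonneg_of_le (fun _ => norm_nonneg _) (fun l => ?_)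
      ((summable_geometric_of_lt_one (r := (1 / 2 : ℝ)) (by norm_num) (by norm_num)).mul_left
        (|cm (N + 1)| * |ω|))
    rw [Real.norm_eq_abs, abs_sub_comm, abs_of_nonneg (sub_nonneg.2 (Mm_le_one N _))]
    refine (one_sub_Mm_le_abs N _).trans ?_
    rw [mul_assoc]
    refine mul_le_mul_of_nonneg_left ?_ (abs_nonneg _)
    rw [abs_div, abs_of_pos (by positivity : (0:ℝ) < 2 ^ (l + 2)), div_eq_mul_inv, one_div,
      inv_pow]
    refine mul_le_mul_of_nonneg_left ?_ (abs_nonneg _)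
    gcongr
    · norm_num
    · omega
  have hm := (multipliable_one_add_of_summable hs).hasProd.tendsto_prod_nat
  simpa [scalProd] using hm

lemma scalProd_nonneg (N : ℕ) (ω : ℝ) : 0 ≤ scalProd N ω :=
  ge_of_tendsto' (scalProd_tendsto N ω)
    (fun _ => Finset.prod_nonneg fun _ _ => Mm_nonneg N _)

lemma scalProd_le_prod (N : ℕ) (ω : ℝ) (n : ℕ) :
    scalProd N ω ≤ ∏ l ∈ Finset.range n, Mm (N + 1) (ω / 2 ^ (l + 2)) := by
  refine le_of_tendsto (scalProd_tendsto N ω) ?_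
  filter_upwards [eventually_ge_atTop n] with k hk
  obtain ⟨d, rfl⟩ := Nat.exists_eq_add_of_le hk
  rw [Finset.prod_range_add]
  exact mul_le_of_le_one_right (Finset.prod_nonneg fun _ _ => Mm_nonneg N _)
    (Finset.prod_le_one (fun _ _ => Mm_nonneg N _) (fun _ _ => Mm_le_one N _))

lemma scalProd_le_one (N : ℕ) (ω : ℝ) : scalProd N ω ≤ 1 := by
  simpa using scalProd_le_prod N ω 0

lemma scalProd_le_factor (N : ℕ) (ω : ℝ) (l : ℕ) :
    scalProd N ω ≤ Mm (N + 1) (ω / 2 ^ (l + 2)) := by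
  refine (scalProd_le_prod N ω (l + 1)).trans ?_
  rw [Finset.prod_range_succ]
  exact mul_le_of_le_one_left (Mm_nonneg N _)
    (Finset.prod_le_one (fun _ _ => Mm_nonneg N _) (fun _ _ => Mm_le_one N _))

lemma measurable_scalProd (N : ℕ) : Measurable (scalProd N) := by
  refine measurable_of_tendsto_metrizable
    (f := fun n ω => ∏ l ∈ Finset.range n, Mm (N + 1) (ω / 2 ^ (l + 2))) (fun n => ?_)
    (tendsto_pi_nhds.2 (scalProd_tendsto N))
  have := continuous_Mm N
  exact (by fun_prop : Continuous _).measurable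

lemma measurable_Fm (N : ℕ) : Measurable (Fm (N + 1)) := by
  have h1 := measurable_scalProd N
  have h2 := (continuous_Mm N).measurable
  have h3 : Fm (N + 1) = fun ω =>
      (1 / (2 * Real.pi)) * (1 - Mm (N + 1) (ω / 2)) * scalProd N ω := funext (Fm_eq N)
  rw [h3]
  fun_prop

lemma Fm_nonneg (N : ℕ) (ω : ℝ) : 0 ≤ Fm (N + 1) ω := by
  rw [Fm_eq]
  exact mul_nonneg (mul_nonneg (by positivity) (sub_nonneg.2 (Mm_le_one N _)))
    (scalProd_nonneg N ω)

lemma inv_two_pi_le_one : 1 / (2 * Real.pi) ≤ 1 := by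
  rw [div_le_one (by positivity)]
  linarith [Real.pi_gt_three]

lemma Fm_le_scalProd (N : ℕ) (ω : ℝ) : Fm (N + 1) ω ≤ scalProd N ω := by
  rw [Fm_eq]
  refine mul_le_of_le_one_left (scalProd_nonneg N ω) (mul_le_one₀ inv_two_pi_le_one
    (sub_nonneg.2 (Mm_le_one N _)) (by linarith [Mm_nonneg N (ω / 2)]))

lemma Fm_le_one (N : ℕ) (ω : ℝ) : Fm (N + 1) ω ≤ 1 :=
  (Fm_le_scalProd N ω).trans (scalProd_le_one N ω)

lemma Fm_le_one_sub (N : ℕ) (ω : ℝ) : Fm (N + 1) ω ≤ 1 - Mm (N + 1) (ω / 2) := by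
  have h : 0 ≤ 1 - Mm (N + 1) (ω / 2) := sub_nonneg.2 (Mm_le_one N _)
  rw [Fm_eq]
  exact (mul_le_of_le_one_right (mul_nonneg (by positivity) h) (scalProd_le_one N ω)).trans
    (mul_le_of_le_one_left h inv_two_pi_le_one)

/-! ### Decay uniform in the number of vanishing moments -/

/-- A majorant of the `N`-th root of the squared modulus of the filter, independent of `N`. -/
noncomputable def majG (ω : ℝ) : ℝ := if 0 ≤ Real.cos ω then 1 else Real.sin ω ^ 2

lemma majG_nonneg (ω : ℝ) : 0 ≤ majG ω := by
  unfold majG; split_ifs <;> positivity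

lemma Mm_le_majG (N : ℕ) (ω : ℝ) : Mm (N + 1) ω ≤ majG ω ^ N := by
  unfold majG
  split_ifs with h
  · simpa using Mm_le_one N ω
  · exact Mm_le_pow N (not_le.1 h).le

/-- The truncated sine square `min (sin²(ω/2)) (4/5)`, for which the majorant satisfies a
contraction estimate. -/
noncomputable def truncSin (ω : ℝ) : ℝ := min ((1 - Real.cos ω) / 2) (4 / 5)

/-- One-step contraction: `G(ω) g(ω) ≤ (4/5) g(2ω)`. Beyond the pass band it uses
`4 y² (1 - y) ≤ 16/27 ≤ (4/5)²` with `y = sin²(ω/2)`. -/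
lemma majG_mul_truncSin_le (ω : ℝ) : majG ω * truncSin ω ≤ 4 / 5 * truncSin (2 * ω) := by
  have h1 := Real.neg_one_le_cos ω
  have h2 := Real.cos_le_one ω
  unfold majG truncSin
  rw [Real.cos_two_mul, Real.sin_sq]
  generalize Real.cos ω = x at *
  have ha := min_le_left ((1 - x) / 2) (4 / 5 : ℝ)
  have hb := min_le_right ((1 - x) / 2) (4 / 5 : ℝ)
  generalize min ((1 - x) / 2) (4 / 5 : ℝ) = g at *
  rcases min_cases ((1 - (2 * x ^ 2 - 1)) / 2) (4 / 5 : ℝ) with ⟨h, _⟩ | ⟨h, _⟩ <;> rw [h]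
  · split_ifs with hx
    · nlinarith
    · nlinarith [mul_le_mul_of_nonneg_left hb (by nlinarith : 0 ≤ 1 - x ^ 2)]
  · split_ifs with hx
    · nlinarith
    · have h3 : 0 ≤ 1 - x ^ 2 := by nlinarith
      have h4 : (1 - x ^ 2) * g ≤ (1 - x ^ 2) * ((1 - x) / 2) := mul_le_mul_of_nonneg_left ha h3
      nlinarith [mul_nonneg (sq_nonneg (x + 1 / 3)) (by linarith : (0:ℝ) ≤ 5 / 3 - x)]

lemma prod_majG_mul_le (n : ℕ) (ω : ℝ) :
    (∏ i ∈ Finset.range n, majG (2 ^ i * ω)) * truncSin ω ≤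
      (4 / 5) ^ n * truncSin (2 ^ n * ω) := by
  induction n with
  | zero => simp
  | succ n ih =>
    rw [Finset.prod_range_succ]
    calc _ = majG (2 ^ n * ω) * ((∏ i ∈ Finset.range n, majG (2 ^ i * ω)) * truncSin ω) := by
          ring
      _ ≤ majG (2 ^ n * ω) * ((4 / 5) ^ n * truncSin (2 ^ n * ω)) :=
          mul_le_mul_of_nonneg_left ih (majG_nonneg _)
      _ = (4 / 5) ^ n * (majG (2 ^ n * ω) * truncSin (2 ^ n * ω)) := by ring
      _ ≤ (4 / 5) ^ n * (4 / 5 * truncSin (2 * (2 ^ n * ω))) := by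
          exact mul_le_mul_of_nonneg_left (majG_mul_truncSin_le _) (by positivity)
      _ = _ := by rw [← mul_assoc 2, ← pow_succ']; ring

lemma prod_majG_le (n : ℕ) {ω : ℝ} (h : Real.cos ω ≤ 0) :
    ∏ i ∈ Finset.range n, majG (2 ^ i * ω) ≤ 2 * (4 / 5) ^ (n + 1) := by
  have h1 : 1 / 2 ≤ truncSin ω := le_min (by linarith) (by norm_num)
  have h2 : truncSin (2 ^ n * ω) ≤ 4 / 5 := min_le_right _ _
  have h3 : 0 ≤ ∏ i ∈ Finset.range n, majG (2 ^ i * ω) :=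
    Finset.prod_nonneg fun _ _ => majG_nonneg _
  have h4 := prod_majG_mul_le n ω
  have h5 : (4 / 5 : ℝ) ^ n * truncSin (2 ^ n * ω) ≤ (4 / 5) ^ n * (4 / 5) := by gcongr
  rw [pow_succ]
  nlinarith

lemma scalProd_le_pow (N n : ℕ) {ω : ℝ} (h : Real.cos (ω / 2 ^ (n + 1)) ≤ 0) :
    scalProd N ω ≤ (2 * (4 / 5) ^ (n + 1)) ^ N := by
  refine (scalProd_le_prod N ω n).trans ?_
  calc _ ≤ ∏ l ∈ Finset.range n, majG (ω / 2 ^ (l + 2)) ^ N :=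
        Finset.prod_le_prod (fun _ _ => Mm_nonneg N _) (fun _ _ => Mm_le_majG N _)
    _ = (∏ l ∈ Finset.range n, majG (ω / 2 ^ (l + 2))) ^ N := Finset.prod_pow _ _ _
    _ = (∏ i ∈ Finset.range n, majG (2 ^ i * (ω / 2 ^ (n + 1)))) ^ N := by
        rw [← Finset.prod_range_reflect]
        congr 1
        refine Finset.prod_congr rfl fun i hi => ?_
        have hi' := Finset.mem_range.1 hi
        congr 1
        have e : n + 1 = i + (n - 1 - i + 2) := by omega
        have e' : (2:ℝ) ^ (n + 1) = 2 ^ i * 2 ^ (n - 1 - i + 2) := by rw [← pow_add, ← e]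
        rw [e']
        field_simp
    _ ≤ _ := by
        gcongr
        · exact Finset.prod_nonneg fun _ _ => majG_nonneg _
        · exact prod_majG_le n h

/-- Every frequency `|ω| ≥ π` lies in a dyadic band `2^n π ≤ |ω| < 2^(n+1) π`. -/
lemma exists_band {ω : ℝ} (h : Real.pi ≤ |ω|) :
    ∃ n : ℕ, 2 ^ n * Real.pi ≤ |ω| ∧ |ω| < 2 ^ (n + 1) * Real.pi := by
  obtain ⟨n, h1, h2⟩ := exists_nat_pow_near (x := |ω| / Real.pi) (y := 2)
    (by rwa [one_le_div Real.pi_pos]) (by norm_num)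
  exact ⟨n, (le_div_iff₀ Real.pi_pos).1 h1, (div_lt_iff₀ Real.pi_pos).1 h2⟩

lemma cos_band {ω : ℝ} {n : ℕ} (h1 : 2 ^ n * Real.pi ≤ |ω|) (h2 : |ω| < 2 ^ (n + 1) * Real.pi) :
    Real.cos (ω / 2 ^ (n + 1)) ≤ 0 := by
  have hp : (0:ℝ) < 2 ^ (n + 1) := by positivity
  rw [← Real.cos_abs, abs_div, abs_of_pos hp]
  have := Real.pi_pos
  refine Real.cos_nonpos_of_pi_div_two_le_of_le ?_ ?_
  · rw [le_div_iff₀ hp, pow_succ]; linarith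
  · rw [div_le_iff₀ hp]; nlinarith

lemma Fm_le_decay {N : ℕ} (hN : 14 ≤ N) {ω : ℝ} (h : Real.pi ≤ |ω|) :
    Fm (N + 1) ω ≤ (128 * Real.pi ^ 2 / ω ^ 2) ^ 2 := by
  obtain ⟨n, h1, h2⟩ := exists_band h
  have hP := (Fm_le_scalProd N ω).trans (scalProd_le_pow N n (cos_band h1 h2))
  set x : ℝ := 2 * (4 / 5) ^ (n + 1) with hx
  have hx0 : 0 ≤ x := by positivity
  have h14 : Fm (N + 1) ω ≤ x ^ 14 := by
    rcases le_total x 1 with hx1 | hx1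
    · exact hP.trans (pow_le_pow_of_le_one hx0 hx1 hN)
    · exact (Fm_le_one N ω).trans (one_le_pow₀ hx1)
  have hω : 0 < |ω| := Real.pi_pos.trans_le h
  have hq : 1 / 2 ^ (n + 1) ≤ Real.pi / |ω| := by
    rw [div_le_div_iff₀ (by positivity) hω]; linarith
  -- `14` is chosen so that `(4/5)^14 ≤ 2^(-4)`
  have hx2 : x ^ 14 ≤ (128 * (1 / 2 ^ (n + 1)) ^ 2) ^ 2 := by
    have e1 : x ^ 14 = 128 ^ 2 * ((4 / 5) ^ 14) ^ (n + 1) := by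
      rw [hx, mul_pow, pow_right_comm]; norm_num
    have e2 : (128 * (1 / 2 ^ (n + 1)) ^ 2 : ℝ) ^ 2 = 128 ^ 2 * ((1 / 2) ^ 4) ^ (n + 1) := by
      rw [← one_div_pow, mul_pow, ← pow_mul, ← pow_mul, ← pow_mul]
      congr 2
      ring
    rw [e1, e2]
    gcongr
    norm_num
  refine h14.trans (hx2.trans ?_)
  rw [← sq_abs ω, mul_div_assoc, ← div_pow]
  gcongr

/-! ### Pointwise limit -/

lemma sin_sq_pow_tendsto {ω : ℝ} (h : Real.cos ω ≠ 0) :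
    Tendsto (fun N : ℕ => (Real.sin ω ^ 2) ^ N) atTop (𝓝 0) := by
  refine tendsto_pow_atTop_nhds_zero_of_lt_one (sq_nonneg _) ?_
  have := Real.sin_sq_add_cos_sq ω
  have h2 : 0 < Real.cos ω ^ 2 := by positivity
  linarith

lemma one_sub_factor_le (N l : ℕ) {ω : ℝ} (h : |ω| < 2 * Real.pi) :
    1 - Mm (N + 1 + 1) (ω / 2 ^ (l + 2)) ≤
      (Real.sin (ω / 4) ^ 2) ^ N * ω ^ 2 * (1 / 2) ^ (l + 1) := by
  have hpi := Real.pi_pos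
  have h1 : |ω / 2 ^ (l + 2)| ≤ |ω / 4| := by
    rw [abs_div, abs_div, abs_of_pos (by positivity : (0:ℝ) < 2 ^ (l + 2)),
      abs_of_pos (by norm_num : (0:ℝ) < 4)]
    have : (1:ℝ) ≤ 2 ^ l := one_le_pow₀ (by norm_num)
    gcongr
    rw [pow_add]; linarith
  have h2 : |ω / 4| < Real.pi / 2 := by
    rw [abs_div, abs_of_pos (by norm_num : (0:ℝ) < 4)]; linarith
  have hc : 0 ≤ Real.cos (ω / 2 ^ (l + 2)) := by
    rw [← Real.cos_abs]
    exact Real.cos_nonneg_of_neg_pi_div_two_le_of_le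
      (by linarith [abs_nonneg (ω / 2 ^ (l + 2))]) (by linarith)
  have hs : Real.sin (ω / 2 ^ (l + 2)) ^ 2 ≤ Real.sin (ω / 4) ^ 2 := by
    have e : ∀ x : ℝ, Real.sin x ^ 2 = Real.sin |x| ^ 2 := fun x => by
      rw [Real.sin_sq, Real.sin_sq, Real.cos_abs]
    rw [e, e (ω / 4)]
    have h0 : 0 ≤ Real.sin |ω / 2 ^ (l + 2)| :=
      Real.sin_nonneg_of_nonneg_of_le_pi (abs_nonneg _) (by linarith)
    have := Real.sin_le_sin_of_le_of_le_pi_div_two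
      (by linarith [abs_nonneg (ω / 2 ^ (l + 2))]) h2.le h1
    gcongr
  have hl : Real.sin (ω / 2 ^ (l + 2)) ^ 2 ≤ ω ^ 2 * (1 / 2) ^ (l + 1) := by
    have h3 : Real.sin (ω / 2 ^ (l + 2)) ^ 2 ≤ (ω / 2 ^ (l + 2)) ^ 2 :=
      sq_le_sq.2 Real.abs_sin_le_abs
    refine h3.trans ?_
    rw [div_pow, div_eq_mul_inv, one_div, inv_pow, ← pow_mul]
    gcongr
    · norm_num
    · omega
  refine (one_sub_Mm_le_pow (N + 1) hc).trans ?_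
  rw [pow_succ, mul_assoc]
  exact mul_le_mul (pow_le_pow_left₀ (sq_nonneg _) hs N) hl (sq_nonneg _) (by positivity)

lemma one_sub_scalProd_le (N : ℕ) {ω : ℝ} (h : |ω| < 2 * Real.pi) :
    1 - scalProd (N + 1) ω ≤ (Real.sin (ω / 4) ^ 2) ^ N * ω ^ 2 := by
  set C : ℝ := (Real.sin (ω / 4) ^ 2) ^ N * ω ^ 2 with hC
  have hC0 : 0 ≤ C := by positivity
  have key : ∀ n : ℕ, 1 - ∏ l ∈ Finset.range n, Mm (N + 1 + 1) (ω / 2 ^ (l + 2)) ≤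
      C * (1 - (1 / 2) ^ n) := by
    intro n
    induction n with
    | zero => simp
    | succ n ih =>
      rw [Finset.prod_range_succ]
      have h1 := one_sub_factor_le N n h
      rw [← hC] at h1
      have h2 := Mm_le_one (N + 1) (ω / 2 ^ (n + 2))
      have h3 : ∏ l ∈ Finset.range n, Mm (N + 1 + 1) (ω / 2 ^ (l + 2)) ≤ 1 :=
        Finset.prod_le_one (fun _ _ => Mm_nonneg _ _) (fun _ _ => Mm_le_one _ _)
      have h4 : (1 / 2 : ℝ) ^ n = 2 * (1 / 2) ^ (n + 1) := by rw [pow_succ]; ring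
      rw [h4] at ih
      nlinarith [mul_nonneg (sub_nonneg.2 h2) (sub_nonneg.2 h3)]
  refine le_of_tendsto' ((scalProd_tendsto (N + 1) ω).const_sub 1) fun n => (key n).trans ?_
  have : (0:ℝ) ≤ (1 / 2) ^ n := by positivity
  nlinarith

lemma scalProd_tendsto_one {ω : ℝ} (h : |ω| < 2 * Real.pi) :
    Tendsto (fun N => scalProd N ω) atTop (𝓝 1) := by
  rw [← tendsto_add_atTop_iff_nat 1]
  have hpi := Real.pi_pos
  have hc : Real.cos (ω / 4) ≠ 0 := by
    have := abs_lt.1 h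
    exact (Real.cos_pos_of_mem_Ioo ⟨by linarith, by linarith⟩).ne'
  have h1 : Tendsto (fun N : ℕ => 1 - (Real.sin (ω / 4) ^ 2) ^ N * ω ^ 2) atTop (𝓝 1) := by
    simpa using ((sin_sq_pow_tendsto hc).mul_const (ω ^ 2)).const_sub 1
  exact tendsto_of_tendsto_of_tendsto_of_le_of_le h1 tendsto_const_nhds
    (fun N => by have := one_sub_scalProd_le N h; dsimp only; linarith)
    (fun N => scalProd_le_one _ _)

lemma Mm_tendsto_zero {ω : ℝ} (h : Real.cos ω < 0) :
    Tendsto (fun N => Mm (N + 1) ω) atTop (𝓝 0) :=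
  squeeze_zero (fun N => Mm_nonneg N ω) (fun N => Mm_le_pow N h.le) (sin_sq_pow_tendsto h.ne)

lemma cos_band_neg {ω : ℝ} {n : ℕ} (h1 : 2 ^ n * Real.pi < |ω|)
    (h2 : |ω| < 2 ^ (n + 1) * Real.pi) : Real.cos (ω / 2 ^ (n + 1)) < 0 := by
  have hp : (0:ℝ) < 2 ^ (n + 1) := by positivity
  rw [← Real.cos_abs, abs_div, abs_of_pos hp]
  have := Real.pi_pos
  refine Real.cos_neg_of_pi_div_two_lt_of_lt ?_ ?_
  · rw [lt_div_iff₀ hp, pow_succ]; linarith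
  · rw [div_lt_iff₀ hp]; nlinarith

/-- Off the dyadic band edges, `F_m` converges to that of the Shannon wavelet. -/
lemma Fm_tendsto {ω : ℝ} (h : ∀ n : ℕ, |ω| ≠ 2 ^ n * Real.pi) :
    Tendsto (fun N => Fm (N + 1) ω) atTop
      (𝓝 ((Set.Ioo Real.pi (2 * Real.pi)).indicator (fun _ => 1 / (2 * Real.pi)) |ω|)) := by
  have hpi := Real.pi_pos
  have hπ : |ω| ≠ Real.pi := by simpa using h 0
  rcases hπ.lt_or_gt with h1 | h1
  · rw [Set.indicator_of_notMem (fun hm => absurd hm.1 h1.not_gt)]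
    have hab := abs_lt.1 h1
    have hc : 0 < Real.cos (ω / 2) :=
      Real.cos_pos_of_mem_Ioo ⟨by linarith, by linarith⟩
    exact squeeze_zero (fun N => Fm_nonneg N ω)
      (fun N => (Fm_le_one_sub N ω).trans (one_sub_Mm_le_pow N hc.le)) (sin_sq_pow_tendsto hc.ne')
  · obtain ⟨n, hn1, hn2⟩ := exists_band h1.le
    have hc := cos_band_neg (lt_of_le_of_ne hn1 (h n).symm) hn2
    rcases n with _ | n
    · have h2 : |ω| < 2 * Real.pi := by simpa using hn2
      rw [Set.indicator_of_mem (Set.mem_Ioo.2 ⟨h1, h2⟩)]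
      have hM := Mm_tendsto_zero hc
      simp only [zero_add, pow_one] at hM
      simp only [Fm_eq]
      simpa using ((hM.const_sub 1).const_mul (1 / (2 * Real.pi))).mul (scalProd_tendsto_one h2)
    · have h2 : 2 * Real.pi ≤ |ω| := by
        refine le_trans ?_ hn1
        have : (1:ℝ) ≤ 2 ^ n := one_le_pow₀ (by norm_num)
        rw [pow_succ]; nlinarith
      rw [Set.indicator_of_notMem (fun hm => absurd hm.2 h2.not_gt)]
      exact squeeze_zero (fun N => Fm_nonneg N ω)
        (fun N => (Fm_le_scalProd N ω).trans (scalProd_le_factor N ω n)) (Mm_tendsto_zero hc)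

/-! ### Passage to the limit under the integral -/

/-- A dominating function independent of the number of moments. Near `0` the zero of `F` of order
at least `2k` absorbs the singular weight. -/
lemma integrand_le (k : ℕ) {p : ℝ} (hp : 1 < p) {N : ℕ} (hN : 14 ≤ N) (hk : k ≤ N) (ω : ℝ) :
    |ω| ^ (-(p * (k : ℝ))) * Fm (N + 1) ω ^ (p / 2) ≤ 256 * Real.pi ^ 2 * (1 + ω ^ 2)⁻¹ := by
  have hpi := Real.pi_gt_three
  have hF0 := Fm_nonneg N ω
  have hF1 := Fm_le_one N ω
  have ha : 0 ≤ p * (k : ℝ) := by positivity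
  rw [← div_eq_mul_inv, le_div_iff₀ (by positivity)]
  rcases le_total Real.pi |ω| with h | h
  · have hω : 1 ≤ |ω| := by linarith
    have hω2 : 1 ≤ ω ^ 2 := by rw [← sq_abs]; nlinarith
    have h1 : |ω| ^ (-(p * (k : ℝ))) ≤ 1 :=
      Real.rpow_le_one_of_one_le_of_nonpos hω (by linarith)
    have h2 : Fm (N + 1) ω ^ (p / 2) ≤ 128 * Real.pi ^ 2 / ω ^ 2 := by
      calc _ ≤ Fm (N + 1) ω ^ (1 / 2 : ℝ) :=
            Real.rpow_le_rpow_of_exponent_ge' hF0 hF1 (by norm_num) (by linarith)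
        _ ≤ _ := by
            rw [← Real.sqrt_eq_rpow]
            exact Real.sqrt_le_iff.2 ⟨by positivity, Fm_le_decay hN h⟩
    have h3 : |ω| ^ (-(p * (k : ℝ))) * Fm (N + 1) ω ^ (p / 2) ≤ 128 * Real.pi ^ 2 / ω ^ 2 :=
      (mul_le_of_le_one_left (Real.rpow_nonneg hF0 _) h1).trans h2
    calc _ ≤ 128 * Real.pi ^ 2 / ω ^ 2 * (ω ^ 2 + ω ^ 2) :=
          mul_le_mul h3 (by linarith) (by positivity) (by positivity)
      _ = _ := by
          have : ω ^ 2 ≠ 0 := by positivity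
          rw [← two_mul, div_mul_eq_mul_div, div_eq_iff this]
          ring
  · have h3 : |ω| ^ (-(p * (k : ℝ))) * Fm (N + 1) ω ^ (p / 2) ≤ 1 := by
      rcases eq_or_ne ω 0 with rfl | hne
      · exact mul_le_one₀ (by rw [abs_zero]; exact Real.zero_rpow_le_one _)
          (Real.rpow_nonneg hF0 _) (Real.rpow_le_one hF0 hF1 (by linarith))
      · have hω : 0 < |ω| := abs_pos.2 hne
        have hab := abs_le.1 h
        have hc : 0 ≤ Real.cos (ω / 2) :=
          Real.cos_nonneg_of_neg_pi_div_two_le_of_le (by linarith) (by linarith)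
        have hs : Real.sin (ω / 2) ^ 2 ≤ |ω| ^ 2 := by
          rw [sq_abs]
          have : Real.sin (ω / 2) ^ 2 ≤ (ω / 2) ^ 2 := sq_le_sq.2 Real.abs_sin_le_abs
          nlinarith [sq_nonneg ω]
        have h4 : Fm (N + 1) ω ≤ (|ω| ^ 2) ^ k :=
          calc _ ≤ (Real.sin (ω / 2) ^ 2) ^ N :=
                (Fm_le_one_sub N ω).trans (one_sub_Mm_le_pow N hc)
            _ ≤ (Real.sin (ω / 2) ^ 2) ^ k :=
                pow_le_pow_of_le_one (sq_nonneg _) (Real.sin_sq_le_one _) hk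
            _ ≤ _ := pow_le_pow_left₀ (sq_nonneg _) hs k
        have h5 : Fm (N + 1) ω ^ (p / 2) ≤ |ω| ^ (p * (k : ℝ)) := by
          refine (Real.rpow_le_rpow hF0 h4 (by linarith)).trans_eq ?_
          rw [← pow_mul, ← Real.rpow_natCast, ← Real.rpow_mul hω.le]
          congr 1
          push_cast
          ring
        calc _ ≤ |ω| ^ (-(p * (k : ℝ))) * |ω| ^ (p * (k : ℝ)) := by gcongr
          _ = 1 := by rw [← Real.rpow_add hω]; simp
    have h6 : ω ^ 2 ≤ Real.pi ^ 2 := by rw [← sq_abs ω]; gcongr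
    calc _ ≤ 1 * (1 + ω ^ 2) := by gcongr
      _ ≤ _ := by nlinarith

lemma integral_tendsto (k : ℕ) {p : ℝ} (hp : 1 < p) :
    Tendsto (fun N : ℕ => ∫ ω : ℝ, |ω| ^ (-(p * (k : ℝ))) * Fm (N + 1) ω ^ (p / 2)) atTop
      (𝓝 (2 * ((1 / (2 * Real.pi)) ^ (p / 2) *
        ∫ x in Real.pi..(2 * Real.pi), x ^ (-(p * (k : ℝ)))))) := by
  have hpi := Real.pi_pos
  have hval : (∫ ω : ℝ, (Set.Ioo Real.pi (2 * Real.pi)).indicator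
      (fun x => (1 / (2 * Real.pi)) ^ (p / 2) * x ^ (-(p * (k : ℝ)))) |ω|) =
      2 * ((1 / (2 * Real.pi)) ^ (p / 2) *
        ∫ x in Real.pi..(2 * Real.pi), x ^ (-(p * (k : ℝ)))) := by
    rw [integral_comp_abs (f := (Set.Ioo Real.pi (2 * Real.pi)).indicator
      (fun x => (1 / (2 * Real.pi)) ^ (p / 2) * x ^ (-(p * (k : ℝ))))),
      setIntegral_indicator measurableSet_Ioo,
      Set.inter_eq_self_of_subset_right
        (show Set.Ioo Real.pi (2 * Real.pi) ⊆ Set.Ioi 0 from fun x hx => hpi.trans hx.1),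
      ← integral_Ioc_eq_integral_Ioo, ← intervalIntegral.integral_of_le (by linarith),
      intervalIntegral.integral_const_mul]
  rw [← hval]
  refine tendsto_integral_filter_of_dominated_convergence
    (fun ω => 256 * Real.pi ^ 2 * (1 + ω ^ 2)⁻¹) ?_ ?_ (integrable_inv_one_add_sq.const_mul _) ?_
  · refine Eventually.of_forall fun N => Measurable.aestronglyMeasurable ?_
    have := measurable_Fm N
    fun_prop
  · filter_upwards [eventually_ge_atTop 14, eventually_ge_atTop k] with N h1 h2
    refine Eventually.of_forall fun ω => ?_
    rw [Real.norm_of_nonneg (mul_nonneg (Real.rpow_nonneg (abs_nonneg _) _)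
      (Real.rpow_nonneg (Fm_nonneg N ω) _))]
    exact integrand_le k hp h1 h2 ω
  · have hcount : (Set.range (fun n : ℕ => (2:ℝ) ^ n * Real.pi) ∪
        Set.range (fun n : ℕ => -((2:ℝ) ^ n * Real.pi))).Countable :=
      (Set.countable_range _).union (Set.countable_range _)
    filter_upwards [hcount.ae_notMem volume] with ω hω
    have hω' : ∀ n : ℕ, |ω| ≠ 2 ^ n * Real.pi := by
      intro n hn
      rcases abs_choice ω with h | h
      · exact hω (Or.inl ⟨n, by dsimp only; rw [← hn, h]⟩)
      · exact hω (Or.inr ⟨n, by dsimp only; rw [← hn, h, neg_neg]⟩)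
    have h1 := ((Fm_tendsto hω').rpow_const (p := p / 2) (Or.inr (by linarith))).const_mul
      (|ω| ^ (-(p * (k : ℝ))))
    convert h1 using 2
    by_cases hm : |ω| ∈ Set.Ioo Real.pi (2 * Real.pi)
    · rw [Set.indicator_of_mem hm, Set.indicator_of_mem hm, mul_comm]
    · rw [Set.indicator_of_notMem hm, Set.indicator_of_notMem hm,
        Real.zero_rpow (by linarith), mul_zero]

/-! ### The constant -/

lemma band_integral {a : ℝ} (ha : 1 < a) :
    (∫ x in Real.pi..(2 * Real.pi), x ^ (-a)) =
      Real.pi * Real.pi ^ (-a) * ((1 - 2 ^ (1 - a)) / (a - 1)) := by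
  have hpi := Real.pi_pos
  have h0 : (0:ℝ) ∉ Set.uIcc Real.pi (2 * Real.pi) := by
    rw [Set.uIcc_of_le (by linarith)]
    exact fun h => absurd h.1 hpi.not_ge
  rw [integral_rpow (Or.inr ⟨by linarith, h0⟩), Real.mul_rpow (by norm_num) hpi.le,
    show -a + 1 = 1 - a by ring]
  have h1 : Real.pi ^ (1 - a) = Real.pi * Real.pi ^ (-a) := by
    rw [sub_eq_add_neg, Real.rpow_add hpi, Real.rpow_one]
  rw [h1]
  have h2 : 1 - a ≠ 0 := by linarith
  have h3 : a - 1 ≠ 0 := by linarith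
  field_simp
  ring

lemma inv_rpow_half_rpow {p : ℝ} (hp : 1 < p) :
    ((1 / (2 * Real.pi)) ^ (p / 2)) ^ (1 / p) = (1 / (2 * Real.pi)) ^ (1 / 2 : ℝ) := by
  rw [← Real.rpow_mul (by positivity)]
  congr 1
  field_simp

theorem stmt2 (k : ℕ) (hk : 1 ≤ k) (p q : ℝ) (hp : 1 < p) (hq : 1 < q) :
    Tendsto (fun m : ℕ =>
        (∫ ω : ℝ, |ω| ^ (-(p * (k : ℝ))) * Fm m ω ^ (p / 2)) ^ (1 / p) /
        (∫ ω : ℝ, Fm m ω ^ (q / 2)) ^ (1 / q)) atTop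
      (𝓝 ((2 * Real.pi) ^ (1 / p - 1 / q) * Real.pi ^ (-(k : ℝ)) *
        ((1 - 2 ^ (1 - p * (k : ℝ))) / (p * (k : ℝ) - 1)) ^ (1 / p))) := by
  rw [← tendsto_add_atTop_iff_nat 1]
  have hpi := Real.pi_pos
  have hk' : (1:ℝ) ≤ k := by exact_mod_cast hk
  have ha : 1 < p * (k : ℝ) := by nlinarith
  have h1 := integral_tendsto k hp
  -- the denominator is the case of the trivial weight
  have h2 : Tendsto (fun N : ℕ => ∫ ω : ℝ, Fm (N + 1) ω ^ (q / 2)) atTop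
      (𝓝 (2 * Real.pi * (1 / (2 * Real.pi)) ^ (q / 2))) := by
    have h := integral_tendsto 0 hq
    simp only [Nat.cast_zero, mul_zero, neg_zero, Real.rpow_zero, one_mul,
      intervalIntegral.integral_const, smul_eq_mul, mul_one] at h
    convert h using 2
    ring
  rw [band_integral ha] at h1
  set E : ℝ := (1 - 2 ^ (1 - p * (k : ℝ))) / (p * (k : ℝ) - 1) with hE
  have hE0 : 0 ≤ E := by
    refine div_nonneg (sub_nonneg.2 ?_) (by linarith)
    exact Real.rpow_le_one_of_one_le_of_nonpos (by norm_num) (by linarith)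
  have hden : (2 * Real.pi * (1 / (2 * Real.pi)) ^ (q / 2)) ^ (1 / q) ≠ 0 := by positivity
  have h3 := (h1.rpow_const (p := 1 / p) (Or.inr (by positivity))).div
    (h2.rpow_const (p := 1 / q) (Or.inr (by positivity))) hden
  have e1 : (2 * ((1 / (2 * Real.pi)) ^ (p / 2) *
      (Real.pi * Real.pi ^ (-(p * (k : ℝ))) * E))) ^ (1 / p) =
      (2 * Real.pi) ^ (1 / p) * (1 / (2 * Real.pi)) ^ (1 / 2 : ℝ) * Real.pi ^ (-(k : ℝ)) *
        E ^ (1 / p) := by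
    have : 2 * ((1 / (2 * Real.pi)) ^ (p / 2) * (Real.pi * Real.pi ^ (-(p * (k : ℝ))) * E)) =
        2 * Real.pi * (1 / (2 * Real.pi)) ^ (p / 2) * Real.pi ^ (-(p * (k : ℝ))) * E := by ring
    rw [this, Real.mul_rpow (by positivity) hE0, Real.mul_rpow (by positivity) (by positivity),
      Real.mul_rpow (by positivity) (by positivity), inv_rpow_half_rpow hp,
      ← Real.rpow_mul hpi.le]
    congr 3
    field_simp
  have e2 : (2 * Real.pi * (1 / (2 * Real.pi)) ^ (q / 2)) ^ (1 / q) =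
      (2 * Real.pi) ^ (1 / q) * (1 / (2 * Real.pi)) ^ (1 / 2 : ℝ) := by
    rw [Real.mul_rpow (by positivity) (by positivity), inv_rpow_half_rpow hq]
  rw [e1, e2] at h3
  have e3 : (2 * Real.pi) ^ (1 / p - 1 / q) * Real.pi ^ (-(k : ℝ)) * E ^ (1 / p) =
      (2 * Real.pi) ^ (1 / p) * (1 / (2 * Real.pi)) ^ (1 / 2 : ℝ) * Real.pi ^ (-(k : ℝ)) *
        E ^ (1 / p) / ((2 * Real.pi) ^ (1 / q) * (1 / (2 * Real.pi)) ^ (1 / 2 : ℝ)) := by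
    rw [Real.rpow_sub (by positivity)]
    have h4 : (1 / (2 * Real.pi)) ^ (1 / 2 : ℝ) ≠ 0 := by positivity
    have h5 : (2 * Real.pi) ^ (1 / q) ≠ 0 := by positivity
    field_simp
  rw [e3]
  exact h3
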